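/- Let d ≥ 1, k > 0, ε ∈ (0,0.1), τ ∈ (0,1), δ ∈ (0,1). Let Z : ℝ^d → ℝ be k-Lipschitz with respect to the Euclidean norm and satisfy Z(q) ≥ τ for all q with ‖q‖₂ ≤ 1. Let ε₀ = ε·τ/k, let N ⊆ {x ∈ ℝ^d : ‖x‖₂ ≤ 1} be a finite ε₀-net of the Euclidean unit ball, and let π : {q : ‖q‖₂ ≤ 1} → N map each q to a net point π(q) ∈ N with ‖q − π(q)‖₂ ≤ ε₀. Suppose that for each p ∈ N, Ỹ(p) is a real-valued random variable satisfying Pr[(1−ε)·Z(p) ≤ Ỹ(p) ≤ (1+ε)·Z(p)] ≥ 1 − δ/|N|. Then with probability at least 1 − δ, simultaneously for all q ∈ ℝ^d with ‖q‖₂ ≤ 1: (1−3ε)·Z(q) ≤ Ỹ(π(q)) ≤ (1+3ε)·Z(q). -/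

import Mathlib

/-!
On the event that every net estimate is `(1 ± ε)`-accurate, all queries are accurate at once:
`|Z q - Z (π q)| ≤ k ε₀ = ε τ ≤ ε Z q`, so `Y (π q)` lies between `(1 - ε)² Z q` and
`(1 + ε)² Z q`, and `(1 - ε)² ≥ 1 - 3ε`, `(1 + ε)² ≤ 1 + 3ε` for `ε ∈ [0, 1]`. That event has
probability at least `1 - δ` by a union bound over the net (`one_sub_le_prob_forall_mem`).
-/

open MeasureTheory ProbabilityTheory

/-- Union bound: if each of the finitely many events `A p`, `p ∈ N`, fails with probability at
most `δ / |N|`, then all of them hold with probability at least `1 - δ`. -/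
lemma one_sub_le_prob_forall_mem {Ω α : Type*} [MeasurableSpace Ω] (μ : Measure Ω)
    [IsProbabilityMeasure μ] (N : Finset α) (hN : N.Nonempty) (A : α → Set Ω) (δ : ℝ)
    (hA : ∀ p ∈ N, MeasurableSet (A p))
    (h : ∀ p ∈ N, ENNReal.ofReal (1 - δ / (N.card : ℝ)) ≤ μ (A p)) :
    ENNReal.ofReal (1 - δ) ≤ μ (⋂ p ∈ N, A p) := by
  have hmeas : MeasurableSet (⋂ p ∈ N, A p) := N.measurableSet_biInter hA
  rw [ENNReal.ofReal_le_iff_le_toReal (measure_ne_top _ _)]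
  change 1 - δ ≤ μ.real (⋂ p ∈ N, A p)
  have hfail : ∀ p ∈ N, μ.real (A p)ᶜ ≤ δ / (N.card : ℝ) := by
    intro p hp
    have hp' : 1 - δ / (N.card : ℝ) ≤ μ.real (A p) :=
      (ENNReal.ofReal_le_iff_le_toReal (measure_ne_top _ _)).1 (h p hp)
    rw [probReal_compl_eq_one_sub (hA p hp)]
    linarith
  have hcard : (N.card : ℝ) ≠ 0 := by exact_mod_cast hN.card_pos.ne'
  have hunion : μ.real (⋂ p ∈ N, A p)ᶜ ≤ δ := by
    calc μ.real (⋂ p ∈ N, A p)ᶜ = μ.real (⋃ p ∈ N, (A p)ᶜ) := by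
          simp only [Set.compl_iInter]
      _ ≤ ∑ p ∈ N, μ.real (A p)ᶜ := measureReal_biUnion_finset_le _ _
      _ ≤ ∑ _p ∈ N, δ / (N.card : ℝ) := Finset.sum_le_sum hfail
      _ = δ := by rw [Finset.sum_const, nsmul_eq_mul]; field_simp
  rw [probReal_compl_eq_one_sub hmeas] at hunion
  linarith

/-- **Adaptive correctness of Adam-Hash queries on the unit ball.** Let `d ≥ 1`, `k > 0`,
`ε ∈ (0,0.1)`, `τ ∈ (0,1)`, `δ ∈ (0,1)`. Let `Z : ℝ^d → ℝ` be `k`-Lipschitz with `Z q ≥ τ` on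
the unit ball, let `ε₀ = ε τ / k`, let `N` be a finite `ε₀`-net of the unit ball, and let `π`
map each point `q` of the unit ball to a net point `π q ∈ N` with `‖q − π q‖ ≤ ε₀`. If for
each `p ∈ N` the random variable `Ỹ p` satisfies
`Pr[(1−ε)Z(p) ≤ Ỹ(p) ≤ (1+ε)Z(p)] ≥ 1 − δ/|N|`, then with probability at least `1 − δ`,
simultaneously for all `q` with `‖q‖ ≤ 1`: `(1−3ε)Z(q) ≤ Ỹ(π(q)) ≤ (1+3ε)Z(q)`. -/
theorem adam_hash_all_queries
    {Ω : Type*} [MeasureSpace Ω] [IsProbabilityMeasure (ℙ : Measure Ω)]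
    {d : ℕ} (hd : 1 ≤ d) (k ε τ δ : ℝ) (hk : 0 < k)
    (hε : ε ∈ Set.Ioo (0 : ℝ) 0.1) (hτ : τ ∈ Set.Ioo (0 : ℝ) 1) (hδ : δ ∈ Set.Ioo (0 : ℝ) 1)
    (Z : EuclideanSpace ℝ (Fin d) → ℝ)
    (hZlip : ∀ q₁ q₂ : EuclideanSpace ℝ (Fin d), |Z q₁ - Z q₂| ≤ k * ‖q₁ - q₂‖)
    (hZτ : ∀ q : EuclideanSpace ℝ (Fin d), ‖q‖ ≤ 1 → τ ≤ Z q)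
    (ε₀ : ℝ) (hε₀ : ε₀ = ε * τ / k)
    (N : Finset (EuclideanSpace ℝ (Fin d)))
    (hNball : ∀ p ∈ N, ‖p‖ ≤ 1)
    (hNnet : ∀ q : EuclideanSpace ℝ (Fin d), ‖q‖ ≤ 1 → ∃ p ∈ N, ‖q - p‖ ≤ ε₀)
    (π : EuclideanSpace ℝ (Fin d) → EuclideanSpace ℝ (Fin d))
    (hπ : ∀ q : EuclideanSpace ℝ (Fin d), ‖q‖ ≤ 1 → π q ∈ N ∧ ‖q - π q‖ ≤ ε₀)
    (Y : EuclideanSpace ℝ (Fin d) → Ω → ℝ)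
    (hmeas : ∀ p ∈ N, Measurable (Y p))
    (hgood : ∀ p ∈ N, ENNReal.ofReal (1 - δ / (N.card : ℝ)) ≤
      ℙ {ω | (1 - ε) * Z p ≤ Y p ω ∧ Y p ω ≤ (1 + ε) * Z p}) :
    ENNReal.ofReal (1 - δ) ≤
      ℙ {ω | ∀ q : EuclideanSpace ℝ (Fin d), ‖q‖ ≤ 1 →
        (1 - 3 * ε) * Z q ≤ Y (π q) ω ∧ Y (π q) ω ≤ (1 + 3 * ε) * Z q} := by
  -- The net is nonempty because it covers the origin.
  have hN : N.Nonempty := by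
    obtain ⟨p, hp, _⟩ := hNnet 0 (by simp)
    exact ⟨p, hp⟩
  refine (one_sub_le_prob_forall_mem ℙ N hN
    (fun p => {ω | (1 - ε) * Z p ≤ Y p ω ∧ Y p ω ≤ (1 + ε) * Z p}) δ ?_ hgood).trans
    (measure_mono ?_)
  · intro p hp
    exact (measurableSet_le measurable_const (hmeas p hp)).inter
      (measurableSet_le (hmeas p hp) measurable_const)
  · intro ω hω q hq
    obtain ⟨hπN, hdist⟩ := hπ q hq
    obtain ⟨hlow, hupp⟩ := Set.mem_iInter₂.1 hω (π q) hπN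
    obtain ⟨hε0, hε1⟩ := hε
    have hε1' : ε < 1 := hε1.trans (by norm_num)
    have hZq : τ ≤ Z q := hZτ q hq
    have hZpos : 0 < Z q := hτ.1.trans_le hZq
    have hclose : |Z q - Z (π q)| ≤ ε * Z q := by
      calc |Z q - Z (π q)| ≤ k * ‖q - π q‖ := hZlip _ _
        _ ≤ k * ε₀ := by gcongr
        _ = ε * τ := by rw [hε₀]; field_simp
        _ ≤ ε * Z q := by gcongr
    obtain ⟨h1, h2⟩ := abs_le.1 hclose
    constructor
    · calc (1 - 3 * ε) * Z q ≤ (1 - ε) * ((1 - ε) * Z q) := by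
            nlinarith [mul_pos hε0 hZpos, mul_pos (mul_pos hε0 hε0) hZpos]
        _ ≤ (1 - ε) * Z (π q) := mul_le_mul_of_nonneg_left (by linarith) (by linarith)
        _ ≤ Y (π q) ω := hlow
    · calc Y (π q) ω ≤ (1 + ε) * Z (π q) := hupp
        _ ≤ (1 + ε) * ((1 + ε) * Z q) := mul_le_mul_of_nonneg_left (by linarith) (by linarith)
        _ ≤ (1 + 3 * ε) * Z q := by
            nlinarith [mul_pos (mul_pos hε0 (sub_pos.2 hε1')) hZpos]
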